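/- Let Λ be a numerical semigroup with enumeration λ, genus g and conductor c, and for i ∈ ℕ let D(i) = {l ∈ ℕ : l ∉ Λ and λ_i − l ∉ Λ}. If λ_i ≥ c, then λ_i is a generator of Λ if and only if #D(i) = g − i + 1 (as integers). -/

import Mathlib

/-!
Write `n = λ_i`. Split the interval `[0, n]` into four classes according to whether `l` and
`n - l` lie in `S`. Let `A` be the class where both do and `D` the class where neither does; the
two mixed classes are exchanged by the reflection `l ↦ n - l`, so they have the same size.
Since `n` is at least the conductor, `[0, n]` contains all `g` gaps, and it contains `i + 1`
elements of `S`. Counting gaps and nongaps through the four classes gives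
`#D + (i + 1) = g + #A`. Finally `{0, n} ⊆ A`, and `n` is a generator exactly when `n ≠ 0` and
`A = {0, n}`, that is, when `#A = 2`.
-/

/-- A numerical semigroup: a subset of ℕ containing 0, closed under addition,
with finite complement. -/
def IsNumericalSemigroup (S : Set ℕ) : Prop :=
  0 ∈ S ∧ (∀ a ∈ S, ∀ b ∈ S, a + b ∈ S) ∧ Sᶜ.Finite

/-- The conductor: the smallest `c` such that every `n ≥ c` belongs to `S`. -/
noncomputable def nsConductor (S : Set ℕ) : ℕ :=
  sInf {c : ℕ | ∀ n : ℕ, c ≤ n → n ∈ S}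

/-- The genus: the number of gaps. -/
noncomputable def nsGenus (S : Set ℕ) : ℕ := Sᶜ.ncard

/-- The enumeration of `S`: the unique increasing bijection `ℕ → S`,
`λ_0 = 0 < λ_1 < λ_2 < ⋯`. -/
noncomputable def nsEnum (S : Set ℕ) : ℕ → ℕ := Nat.nth (· ∈ S)

/-- A generator: a nonzero element that is not a sum of two nonzero elements. -/
def IsGenerator (S : Set ℕ) (x : ℕ) : Prop :=
  x ∈ S ∧ x ≠ 0 ∧ ¬ ∃ a ∈ S, ∃ b ∈ S, a ≠ 0 ∧ b ≠ 0 ∧ a + b = x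

/-- An ordinary numerical semigroup: `{0} ∪ [c, ∞)`. -/
def IsOrdinary (S : Set ℕ) : Prop := S = {0} ∪ Set.Ici (nsConductor S)

/-- An effective generator: a generator that is ≥ the conductor. -/
def IsEffectiveGenerator (S : Set ℕ) (x : ℕ) : Prop :=
  IsGenerator S x ∧ nsConductor S ≤ x

/-- A strong generator: an effective generator `x` such that `x + λ₁` is a
generator of `S \ {x}`. -/
def IsStrongGenerator (S : Set ℕ) (x : ℕ) : Prop :=
  IsEffectiveGenerator S x ∧ IsGenerator (S \ {x}) (x + nsEnum S 1)

/-- The Frobenius number: the largest gap. -/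
noncomputable def nsFrobenius (S : Set ℕ) : ℕ := sSup Sᶜ

/-- An infinite chain of numerical semigroups: `Λ_0 = ℕ` and each `Λ_i` is
obtained from `Λ_{i+1}` by adjoining its Frobenius number. -/
def IsInfiniteChain (L : ℕ → Set ℕ) : Prop :=
  (∀ i, IsNumericalSemigroup (L i)) ∧ L 0 = Set.univ ∧
  ∀ i, L (i + 1) ≠ Set.univ ∧ L i = L (i + 1) ∪ {nsFrobenius (L (i + 1))}

/-- `T` is a descendant of `S`: `T ⊆ S` and they agree below the conductor of `S`. -/
def IsDescendant (S T : Set ℕ) : Prop :=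
  IsNumericalSemigroup T ∧ T ⊆ S ∧
  T ∩ Set.Iio (nsConductor S) = S ∩ Set.Iio (nsConductor S)

/-- Every integer from the conductor on is an element of the semigroup: the conductor is an
infimum over a nonempty set, hence not a junk value. -/
theorem mem_of_nsConductor_le {S : Set ℕ} (hS : IsNumericalSemigroup S) {n : ℕ}
    (hn : nsConductor S ≤ n) : n ∈ S := by
  have hne : {c : ℕ | ∀ n : ℕ, c ≤ n → n ∈ S}.Nonempty := by
    obtain ⟨b, hb⟩ := hS.2.2.bddAbove
    refine ⟨b + 1, fun n hn => ?_⟩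
    by_contra h
    have := hb h
    omega
  exact Nat.sInf_mem hne n hn

open Classical in
/-- The numbers `l ≤ n` such that both `l` and `n - l` belong to `S`, i.e. the first summands of
the decompositions of `n` into two elements of `S`. -/
noncomputable def decomps (S : Set ℕ) (n : ℕ) : Finset ℕ :=
  (Finset.range (n + 1)).filter (fun l => l ∈ S ∧ n - l ∈ S)

theorem mem_decomps {S : Set ℕ} {n l : ℕ} :
    l ∈ decomps S n ↔ l ≤ n ∧ l ∈ S ∧ n - l ∈ S := by
  simp [decomps]

open Classical in
/-- The double count over the four classes of `[0, n]`. -/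
theorem ncard_add_card_filter (S : Set ℕ) (n : ℕ) (hn : ∀ m, n ≤ m → m ∈ S) :
    {l : ℕ | l ∉ S ∧ n - l ∉ S}.ncard + ((Finset.range (n + 1)).filter (· ∈ S)).card =
      Sᶜ.ncard + (decomps S n).card := by
  have hD : {l : ℕ | l ∉ S ∧ n - l ∉ S} =
      ((((Finset.range (n + 1)).filter (· ∉ S)).filter (fun l => n - l ∉ S) : Finset ℕ) :
        Set ℕ) := by
    ext l
    have := hn l
    simp only [Set.mem_ofPred_eq, Finset.coe_filter, Finset.mem_filter, Finset.mem_range]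
    grind
  have hG : Sᶜ = (((Finset.range (n + 1)).filter (· ∉ S) : Finset ℕ) : Set ℕ) := by
    ext l
    have := hn l
    simp only [Set.mem_compl_iff, Finset.coe_filter, Set.mem_ofPred_eq, Finset.mem_range]
    grind
  have hA : decomps S n =
      ((Finset.range (n + 1)).filter (· ∈ S)).filter (fun l => n - l ∈ S) := by
    rw [decomps, Finset.filter_filter]
  have hmixed : (((Finset.range (n + 1)).filter (· ∉ S)).filter (fun l => n - l ∈ S)).card =
      (((Finset.range (n + 1)).filter (· ∈ S)).filter (fun l => n - l ∉ S)).card := by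
    refine Finset.card_nbij' (fun l => n - l) (fun l => n - l) ?_ ?_ ?_ ?_ <;>
    · intro l hl
      simp only [Finset.coe_filter, Finset.mem_filter, Finset.mem_range, Set.mem_ofPred_eq] at hl ⊢
      have : n - (n - l) = l := by omega
      grind
  have h1 := Finset.card_filter_add_card_filter_not
    (s := (Finset.range (n + 1)).filter (· ∈ S)) (fun l => n - l ∈ S)
  have h2 := Finset.card_filter_add_card_filter_not
    (s := (Finset.range (n + 1)).filter (· ∉ S)) (fun l => n - l ∈ S)
  rw [hD, hG, hA, Set.ncard_coe_finset, Set.ncard_coe_finset]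
  omega

theorem isGenerator_iff_card_decomps {S : Set ℕ} (h0 : 0 ∈ S) {n : ℕ} (hn : n ∈ S) :
    IsGenerator S n ↔ (decomps S n).card = 2 := by
  have hsub : ({0, n} : Finset ℕ) ⊆ decomps S n := by
    intro l hl
    rw [mem_decomps]
    rcases Finset.mem_insert.1 hl with rfl | hl
    · simp [h0, hn]
    · rw [Finset.mem_singleton.1 hl]
      simp [h0, hn]
  constructor
  · rintro ⟨-, hne, hgen⟩
    have heq : decomps S n = {0, n} := by
      refine Finset.Subset.antisymm (fun l hl => ?_) hsub
      obtain ⟨hle, hl, hl'⟩ := mem_decomps.1 hl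
      by_contra hmem
      simp only [Finset.mem_insert, Finset.mem_singleton, not_or] at hmem
      exact hgen ⟨l, hl, n - l, hl', hmem.1, by omega, by omega⟩
    rw [heq, Finset.card_pair hne.symm]
  · intro hcard
    have hne : n ≠ 0 := by
      rintro rfl
      have : decomps S 0 ⊆ {0} := fun l hl => by
        simpa using (mem_decomps.1 hl).1
      have := Finset.card_le_card this
      simp at this
      omega
    have heq : ({0, n} : Finset ℕ) = decomps S n :=
      Finset.eq_of_subset_of_card_le hsub (by rw [hcard, Finset.card_pair hne.symm])
    refine ⟨hn, hne, ?_⟩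
    rintro ⟨a, ha, b, hb, ha0, hb0, hab⟩
    have hmem : a ∈ decomps S n :=
      mem_decomps.2 ⟨by omega, ha, by rwa [show n - a = b by omega]⟩
    rw [← heq] at hmem
    simp only [Finset.mem_insert, Finset.mem_singleton] at hmem
    omega

open Classical in
theorem card_filter_range_nsEnum {S : Set ℕ} (hS : IsNumericalSemigroup S) (i : ℕ) :
    ((Finset.range (nsEnum S i + 1)).filter (· ∈ S)).card = i + 1 := by
  have hinf : {m | m ∈ S}.Infinite := by
    have := hS.2.2.infinite_compl
    rwa [compl_compl] at this
  rw [← Nat.count_eq_card_filter_range, nsEnum]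
  exact Nat.count_nth_succ_of_infinite hinf i

/-- For a numerical semigroup with enumeration `λ`, genus `g` and
conductor `c`, and `D(i) = {l ∉ Λ : λ_i - l ∉ Λ}`, if `λ_i ≥ c` then `λ_i` is a
generator iff `#D(i) = g - i + 1` (as integers). -/
theorem stmt_2 (S : Set ℕ) (hS : IsNumericalSemigroup S) (i : ℕ)
    (hi : nsConductor S ≤ nsEnum S i) :
    IsGenerator S (nsEnum S i) ↔
      (({l : ℕ | l ∉ S ∧ nsEnum S i - l ∉ S}.ncard : ℤ) =
        (nsGenus S : ℤ) - (i : ℤ) + 1) := by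
  rw [isGenerator_iff_card_decomps hS.1 (mem_of_nsConductor_le hS hi), nsGenus]
  have h := ncard_add_card_filter S (nsEnum S i)
    (fun m hm => mem_of_nsConductor_le hS (hi.trans hm))
  rw [card_filter_range_nsEnum hS i] at h
  omega
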